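/- arXiv:1907.03601 — 3 statements merged into one kernel-verified Lean document; each statement's English description precedes it below -/
import Mathlib

section
/- Let a < b be real numbers and let f : [a,b] → ℝ be continuous (so that ∫_a^b f(t) dt exists). Then the q-integral converges to the ordinary integral as q → 1⁻: lim_{q→1⁻} (1−q)(b−a) ∑_{n=0}^∞ q^n f(q^n b + (1−q^n) a) = ∫_a^b f(t) dt. -/
open Filter Topology Set intervalIntegral

/-!
The points `x n = qⁿ b + (1 - qⁿ) a` decrease from `b` to `a`, and `x n - x (n+1)` equals
`qⁿ (1 - q) (b - a)`. Hence the quantum integral is a Riemann sum over infinitely many intervals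
`[x (n+1), x n]`, tagged at their right endpoints, with mesh at most `(1 - q) (b - a)`. If `f`
oscillates by at most `ε` on that scale, the error of the first `N` terms against
`∫ t in x N..b, f t` is at most `ε (b - x N)` (`abs_partial_sum_sub_integral_le`). Letting `N → ∞`
bounds the full error by `ε (b - a)` (`abs_quantum_integral_sub_integral_le`), and uniform
continuity of `f` on `[a, b]` provides such an `ε`-scale as soon as `q` is close to `1`.
-/

lemma quantum_node_mem_Icc {a b s : ℝ} (hab : a < b) (h0 : 0 ≤ s) (h1 : s ≤ 1) :
    s * b + (1 - s) * a ∈ Icc a b :=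
  ⟨by nlinarith, by nlinarith⟩

lemma abs_partial_sum_sub_integral_le {a b q ε δ : ℝ} (hab : a < b) {f : ℝ → ℝ}
    (hf : ContinuousOn f (Icc a b)) (hq0 : 0 < q) (hq1 : q < 1)
    (hδ : (1 - q) * (b - a) < δ)
    (hosc : ∀ x ∈ Icc a b, ∀ y ∈ Icc a b, |x - y| < δ → |f x - f y| ≤ ε) (N : ℕ) :
    |(1 - q) * (b - a) * ∑ n ∈ Finset.range N, q ^ n * f (q ^ n * b + (1 - q ^ n) * a)
      - ∫ t in (q ^ N * b + (1 - q ^ N) * a)..b, f t| ≤ ε * ((b - a) * (1 - q ^ N)) := by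
  induction N with
  | zero => simp
  | succ N ih =>
    have hs0 : 0 < q ^ N := pow_pos hq0 N
    have hs1 : q ^ N ≤ 1 := pow_le_one₀ hq0.le hq1.le
    rw [Finset.sum_range_succ, pow_succ]
    set s := q ^ N
    have hsq : s * q ≤ s := by nlinarith
    have hx : s * b + (1 - s) * a ∈ Icc a b := quantum_node_mem_Icc hab hs0.le hs1
    have hy : s * q * b + (1 - s * q) * a ∈ Icc a b :=
      quantum_node_mem_Icc hab (by positivity) (hsq.trans hs1)
    have hlen : (s * b + (1 - s) * a) - (s * q * b + (1 - s * q) * a)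
        = s * ((1 - q) * (b - a)) := by ring
    have hpos : 0 < (1 - q) * (b - a) := mul_pos (by linarith) (by linarith)
    have hmesh : s * ((1 - q) * (b - a)) ≤ (1 - q) * (b - a) :=
      mul_le_of_le_one_left hpos.le hs1
    set x := s * b + (1 - s) * a
    set y := s * q * b + (1 - s * q) * a
    have hlen0 : 0 < s * ((1 - q) * (b - a)) := mul_pos hs0 hpos
    have hyx : y ≤ x := by linarith
    have hint : ∀ u ∈ Icc a b, ∀ v ∈ Icc a b, IntervalIntegrable f MeasureTheory.volume u v :=
      fun u hu v hv => (hf.mono (uIcc_subset_Icc hu hv)).intervalIntegrable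
    have hb : b ∈ Icc a b := right_mem_Icc.2 hab.le
    have hsplit := integral_add_adjacent_intervals (hint y hy x hx) (hint x hx b hb)
    have hone : |∫ t in y..x, (f x - f t)| ≤ ε * |x - y| := by
      rw [← Real.norm_eq_abs]
      refine norm_integral_le_of_norm_le_const fun t ht => ?_
      rw [uIoc_of_le hyx] at ht
      refine hosc x hx t ⟨hy.1.trans ht.1.le, ht.2.trans hx.2⟩ ?_
      rw [abs_of_nonneg (by linarith [ht.2])]
      linarith [ht.1]
    rw [integral_sub intervalIntegrable_const (hint y hy x hx), integral_const, smul_eq_mul, hlen,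
      abs_of_pos hlen0] at hone
    have hsum := (abs_add_le _ _).trans (add_le_add ih hone)
    rw [← hsplit]
    refine (le_of_eq ?_).trans (hsum.trans_eq ?_)
    · exact congrArg abs (by ring)
    · ring

lemma abs_quantum_integral_sub_integral_le {a b q ε δ : ℝ} (hab : a < b) {f : ℝ → ℝ}
    (hf : ContinuousOn f (Icc a b)) (hq0 : 0 < q) (hq1 : q < 1)
    (hδ : (1 - q) * (b - a) < δ)
    (hosc : ∀ x ∈ Icc a b, ∀ y ∈ Icc a b, |x - y| < δ → |f x - f y| ≤ ε) :
    |(1 - q) * (b - a) * ∑' n : ℕ, q ^ n * f (q ^ n * b + (1 - q ^ n) * a)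
      - ∫ t in a..b, f t| ≤ ε * (b - a) := by
  have hmem : ∀ n : ℕ, q ^ n * b + (1 - q ^ n) * a ∈ Icc a b := fun n =>
    quantum_node_mem_Icc hab (pow_pos hq0 n).le (pow_le_one₀ hq0.le hq1.le)
  obtain ⟨M, hM⟩ := isCompact_Icc.exists_bound_of_continuousOn hf
  have hsummable : Summable fun n : ℕ => q ^ n * f (q ^ n * b + (1 - q ^ n) * a) := by
    refine Summable.of_norm_bounded
      ((summable_geometric_of_lt_one hq0.le hq1).mul_right M) fun n => ?_
    rw [norm_mul, Real.norm_of_nonneg (pow_pos hq0 n).le]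
    exact mul_le_mul_of_nonneg_left (hM _ (hmem n)) (pow_pos hq0 n).le
  have hpow : Tendsto (fun N : ℕ => q ^ N) atTop (𝓝 0) :=
    tendsto_pow_atTop_nhds_zero_of_lt_one hq0.le hq1
  have hnode : Tendsto (fun N : ℕ => q ^ N * b + (1 - q ^ N) * a) atTop (𝓝[Icc a b] a) := by
    refine tendsto_nhdsWithin_iff.2 ⟨?_, Eventually.of_forall hmem⟩
    simpa using (hpow.mul_const b).add ((hpow.const_sub 1).mul_const a)
  have hprim : ContinuousOn (fun x => ∫ t in x..b, f t) (Icc a b) := by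
    rw [← uIcc_of_le hab.le] at hf ⊢
    exact continuousOn_primitive_interval_left (hf.integrableOn_uIcc)
  have hlimI := (hprim a (left_mem_Icc.2 hab.le)).tendsto.comp hnode
  have hlimS := (hsummable.hasSum.tendsto_sum_nat).const_mul ((1 - q) * (b - a))
  have hlimR : Tendsto (fun N : ℕ => ε * ((b - a) * (1 - q ^ N))) atTop (𝓝 (ε * (b - a))) := by
    simpa using ((hpow.const_sub 1).const_mul (b - a)).const_mul ε
  exact le_of_tendsto_of_tendsto' (hlimS.sub hlimI).abs hlimR
    (abs_partial_sum_sub_integral_le hab hf hq0 hq1 hδ hosc)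

/-- For `f` continuous on `[a,b]`, the quantum integral
`(1−q)(b−a) ∑ qⁿ f(qⁿ b + (1−qⁿ) a)` tends to `∫_a^b f(t) dt` as `q → 1⁻`
(through `q ∈ (0,1)`). -/
theorem quantum_integral_tendsto_integral
    (a b : ℝ) (hab : a < b) (f : ℝ → ℝ)
    (hf : ContinuousOn f (Set.Icc a b)) :
    Filter.Tendsto
      (fun q : ℝ => (1 - q) * (b - a) * ∑' n : ℕ, q ^ n * f (q ^ n * b + (1 - q ^ n) * a))
      (nhdsWithin 1 (Set.Ioo (0 : ℝ) 1))
      (nhds (∫ t in a..b, f t)) := by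
  have hba : 0 < b - a := sub_pos.2 hab
  rw [Metric.tendsto_nhds]
  intro η hη
  -- Half of `η / (b - a)` leaves room for the strict inequality at the end.
  obtain ⟨δ, hδ, hosc⟩ := Metric.uniformContinuousOn_iff_le.1
    (isCompact_Icc.uniformContinuousOn_of_continuous hf) (η / 2 / (b - a)) (by positivity)
  have hmesh : ∀ᶠ q : ℝ in 𝓝[Ioo 0 1] 1, (1 - q) * (b - a) < δ := by
    have hcont : Tendsto (fun q : ℝ => (1 - q) * (b - a)) (𝓝 1) (𝓝 ((1 - 1) * (b - a))) :=
      Continuous.tendsto (by fun_prop) 1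
    exact (hcont.mono_left nhdsWithin_le_nhds).eventually_lt_const (by simpa using hδ)
  filter_upwards [hmesh, self_mem_nhdsWithin] with q hq hq01
  have hbound := abs_quantum_integral_sub_integral_le hab hf hq01.1 hq01.2 hq
    fun x hx y hy hxy => hosc x hx y hy hxy.le
  rw [div_mul_cancel₀ _ hba.ne'] at hbound
  rw [Real.dist_eq]
  linarith
end

section
/- (Classical midpoint type inequality) Let a < b and let f : [a,b] → ℝ be differentiable with |f′| convex on [a,b]. Then |f((a+b)/2) − (1/(b−a)) ∫_a^b f(t) dt| ≤ (b−a)(|f′(a)| + |f′(b)|)/8. -/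
open Filter Topology Set intervalIntegral

/-!
Let `c` be the midpoint, `A = |f′ a|`, `B = |f′ b|`. By convexity `|f′|` lies below the chord
`L t = (A + B) / 2 + (B - A) / (b - a) * (t - c)`. If `P` is the primitive of `L` vanishing at `c`,
then `P - f` and `P + f` are both monotone, so `|f t - f c| ≤ |P t|`, with `P ≤ 0` left of `c` and
`P ≥ 0` right of it. Integrating this bound over the two halves, the quadratic parts of `P` cancel
and the linear part gives `(A + B) / 2 * (b - a) ^ 2 / 4`. Comparing `f` with `P` by monotonicity
avoids integrating `f′`.
-/

/-- A function whose derivative is dominated by that of `P` has increments dominated by those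
of `P`. -/
lemma abs_sub_le_sub_of_abs_derivWithin_le {a b : ℝ} {f P P' : ℝ → ℝ}
    (hf : DifferentiableOn ℝ f (Icc a b)) (hP : ∀ t, HasDerivAt P (P' t) t)
    (hle : ∀ t ∈ Icc a b, |derivWithin f (Icc a b) t| ≤ P' t)
    {x y : ℝ} (hx : x ∈ Icc a b) (hy : y ∈ Icc a b) (hxy : x ≤ y) :
    |f y - f x| ≤ P y - P x := by
  have hPc : ContinuousOn P (Icc a b) := fun t _ => (hP t).continuousAt.continuousWithinAt
  have hfd : ∀ t ∈ interior (Icc a b), HasDerivAt f (derivWithin f (Icc a b) t) t := by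
    intro t ht
    exact (hf t (interior_subset ht)).hasDerivWithinAt.hasDerivAt (mem_interior_iff_mem_nhds.1 ht)
  have h₁ : MonotoneOn (fun t => P t - f t) (Icc a b) := by
    refine monotoneOn_of_hasDerivWithinAt_nonneg (convex_Icc a b) (hPc.sub hf.continuousOn)
      (fun t ht => ((hP t).sub (hfd t ht)).hasDerivWithinAt) fun t ht => ?_
    linarith [(abs_le.1 (hle t (interior_subset ht))).2]
  have h₂ : MonotoneOn (fun t => P t + f t) (Icc a b) := by
    refine monotoneOn_of_hasDerivWithinAt_nonneg (convex_Icc a b) (hPc.add hf.continuousOn)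
      (fun t ht => ((hP t).add (hfd t ht)).hasDerivWithinAt) fun t ht => ?_
    linarith [(abs_le.1 (hle t (interior_subset ht))).1]
  have e₁ := h₁ hx hy hxy
  have e₂ := h₂ hx hy hxy
  simp only at e₁ e₂
  exact abs_le.2 ⟨by linarith, by linarith⟩

lemma integral_quadratic_centered (m s c x y : ℝ) :
    ∫ t in x..y, (m * (t - c) + s / 2 * (t - c) ^ 2) =
      (m / 2 * (y - c) ^ 2 + s / 6 * (y - c) ^ 3) -
        (m / 2 * (x - c) ^ 2 + s / 6 * (x - c) ^ 3) := by
  refine integral_eq_sub_of_hasDerivAt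
    (f := fun t => m / 2 * (t - c) ^ 2 + s / 6 * (t - c) ^ 3) (fun t _ => ?_)
    (Continuous.intervalIntegrable (by fun_prop) _ _)
  have h := (hasDerivAt_id t).sub_const c
  refine (((h.pow 2).const_mul (m / 2)).add ((h.pow 3).const_mul (s / 6))).congr_deriv ?_
  simp only [id]
  push_cast
  ring

/-- classical midpoint type inequality: if `f` is differentiable on
`[a,b]` with `|f′|` convex on `[a,b]`, then
`|f((a+b)/2) − (1/(b−a)) ∫_a^b f| ≤ (b−a)(|f′(a)| + |f′(b)|)/8`. -/
theorem classical_midpoint_inequality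
    (a b : ℝ) (hab : a < b) (f : ℝ → ℝ)
    (hf : DifferentiableOn ℝ f (Set.Icc a b))
    (hconv : ConvexOn ℝ (Set.Icc a b) fun t => |derivWithin f (Set.Icc a b) t|) :
    |f ((a + b) / 2) - (1 / (b - a)) * ∫ t in a..b, f t| ≤
      (b - a) * (|derivWithin f (Set.Icc a b) a| + |derivWithin f (Set.Icc a b) b|) / 8 := by
  have hba : 0 < b - a := sub_pos.2 hab
  obtain ⟨c, hc⟩ : ∃ c, c = (a + b) / 2 := ⟨_, rfl⟩
  obtain ⟨A, hA⟩ : ∃ A, A = |derivWithin f (Icc a b) a| := ⟨_, rfl⟩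
  obtain ⟨B, hB⟩ : ∃ B, B = |derivWithin f (Icc a b) b| := ⟨_, rfl⟩
  obtain ⟨m, hm⟩ : ∃ m, m = (A + B) / 2 := ⟨_, rfl⟩
  obtain ⟨s, hs⟩ : ∃ s, s = (B - A) / (b - a) := ⟨_, rfl⟩
  have hac : a ≤ c := by linarith
  have hcb : c ≤ b := by linarith
  have hchord : ∀ t ∈ Icc a b, |derivWithin f (Icc a b) t| ≤ m + s * (t - c) := by
    intro t ht
    have h := hconv.2 (left_mem_Icc.2 hab.le) (right_mem_Icc.2 hab.le)
      (div_nonneg (sub_nonneg.2 ht.2) hba.le) (div_nonneg (sub_nonneg.2 ht.1) hba.le)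
      (by field_simp; ring)
    simp only [smul_eq_mul, ← hA, ← hB] at h
    have e : (b - t) / (b - a) * a + (t - a) / (b - a) * b = t := by field_simp; ring
    rw [e] at h
    refine h.trans_eq ?_
    rw [hm, hs, hc]
    field_simp
    ring
  have hP : ∀ t, HasDerivAt (fun t => m * (t - c) + s / 2 * (t - c) ^ 2) (m + s * (t - c)) t := by
    intro t
    have h := (hasDerivAt_id t).sub_const c
    refine ((h.const_mul m).add ((h.pow 2).const_mul (s / 2))).congr_deriv ?_
    simp only [id]
    push_cast
    ring
  have hinc := fun {x y : ℝ} => abs_sub_le_sub_of_abs_derivWithin_le (x := x) (y := y) hf hP hchord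
  have hcont : ContinuousOn (fun t => f c - f t) (Icc a b) :=
    continuousOn_const.sub hf.continuousOn
  have hi₁ : IntervalIntegrable (fun t => f c - f t) MeasureTheory.volume a c :=
    (hcont.mono (Icc_subset_Icc_right hcb)).intervalIntegrable_of_Icc hac
  have hi₂ : IntervalIntegrable (fun t => f c - f t) MeasureTheory.volume c b :=
    (hcont.mono (Icc_subset_Icc_left hac)).intervalIntegrable_of_Icc hcb
  have hleft : |∫ t in a..c, (f c - f t)| ≤
      ∫ t in a..c, -(m * (t - c) + s / 2 * (t - c) ^ 2) := by
    rw [← Real.norm_eq_abs]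
    refine norm_integral_le_of_norm_le hac (MeasureTheory.ae_of_all _ fun t ht => ?_)
      (Continuous.intervalIntegrable (by fun_prop) _ _)
    have := hinc (x := t) (y := c) ⟨ht.1.le, ht.2.trans hcb⟩ ⟨hac, hcb⟩ ht.2
    rw [Real.norm_eq_abs]
    simpa using this
  have hright : |∫ t in c..b, (f c - f t)| ≤
      ∫ t in c..b, (m * (t - c) + s / 2 * (t - c) ^ 2) := by
    rw [← Real.norm_eq_abs]
    refine norm_integral_le_of_norm_le hcb (MeasureTheory.ae_of_all _ fun t ht => ?_)
      (Continuous.intervalIntegrable (by fun_prop) _ _)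
    have := hinc (x := c) (y := t) ⟨hac, hcb⟩ ⟨hac.trans ht.1.le, ht.2⟩ ht.1.le
    rw [Real.norm_eq_abs, abs_sub_comm]
    simpa using this
  rw [integral_neg, integral_quadratic_centered] at hleft
  rw [integral_quadratic_centered] at hright
  have hsum : ∫ t in a..b, (f c - f t) = (b - a) * f c - ∫ t in a..b, f t := by
    rw [integral_sub intervalIntegrable_const
      (hf.continuousOn.intervalIntegrable_of_Icc hab.le)]
    simp
  have hbound : |∫ t in a..b, (f c - f t)| ≤ (b - a) ^ 2 * (A + B) / 8 := by
    rw [← integral_add_adjacent_intervals hi₁ hi₂]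
    refine (abs_add_le _ _).trans ((add_le_add hleft hright).trans_eq ?_)
    rw [hm, hc]
    ring
  have hmean : f c - 1 / (b - a) * ∫ t in a..b, f t =
      (∫ t in a..b, (f c - f t)) / (b - a) := by
    rw [hsum]
    field_simp
  rw [← hc, ← hA, ← hB, hmean, abs_div, abs_of_pos hba, div_le_iff₀ hba]
  exact hbound.trans_eq (by ring)
end

section
/- (Classical midpoint power-mean inequality) Let a < b, let r ≥ 1, and let f : [a,b] → ℝ be differentiable with |f′|^r convex on [a,b]. Then |f((a+b)/2) − (1/(b−a)) ∫_a^b f(t) dt| ≤ (b−a) · (1/2^{3−3/r}) · [ ( |f′(a)|^r/24 + |f′(b)|^r/12 )^{1/r} + ( |f′(a)|^r/12 + |f′(b)|^r/24 )^{1/r} ]. -/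
open Filter Topology Set intervalIntegral

/-!
Write `A = |f′(a)|^r`, `B = |f′(b)|^r` and `m = (a+b)/2`. By convexity `|f′|^r` lies below its chord
`y(t) = A + (t-a)/(b-a) * (B-A)`, so `|f′| ≤ y^(1/r)`. As `x ↦ x^(1/r)` is concave, it lies below
its tangent line at any point `M` (`exists_tangent_rpow`), which yields an affine bound
`|f′(t)| ≤ M^(1/r) + k * (y(t) - M)`.

An affine bound on `|f′|` integrates to a quadratic bound on increments of `f`
(`abs_sub_le_of_affine`), and integrating once more bounds `|∫_a^m (f m - f t) dt|` and
`|∫_m^b (f t - f m) dt|`. On each half `M` is the mean of `y` for the weight `t - a`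
(resp. `b - t`), namely `(2A+B)/3` (resp. `(A+2B)/3`). With this choice the slope term integrates
to zero and exactly `(b-a)^2/8 * M^(1/r)` remains. This replaces the power-mean (Hölder)
inequality, and no integrability of `f′` is needed.
-/

/-- Tangent line bound for the concave function `y ↦ y^(1/r)` at `M`. At `M = 0` the tangent may be
vertical, and only the point `y = 0` is covered. -/
lemma exists_tangent_rpow {r M : ℝ} (hr : 1 ≤ r) (hM : 0 ≤ M) :
    ∃ k : ℝ, ∀ y : ℝ, 0 ≤ y → (M = 0 → y = 0) →
      y ^ (1 / r) ≤ M ^ (1 / r) + k * (y - M) := by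
  rcases hM.eq_or_lt with h0 | hpos
  · refine ⟨0, fun y _ h => ?_⟩
    rw [h h0.symm, ← h0]
    simp
  · refine ⟨M ^ (1 / r) * (1 / r) / M, fun y hy _ => ?_⟩
    have hr0 : 0 < r := by linarith
    have hB : (1 + (y / M - 1)) ^ (1 / r) ≤ 1 + (1 / r) * (y / M - 1) := by
      apply rpow_one_add_le_one_add_mul_self
      · have : 0 ≤ y / M := by positivity
        linarith
      · positivity
      · rw [div_le_one hr0]; exact hr
    have e : y ^ (1 / r) = M ^ (1 / r) * (1 + (y / M - 1)) ^ (1 / r) := by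
      rw [← Real.mul_rpow hM (by have : 0 ≤ y / M := by positivity
                                 linarith)]
      congr 1
      field_simp
      ring
    rw [e]
    calc _ ≤ M ^ (1 / r) * (1 + (1 / r) * (y / M - 1)) := by gcongr
      _ = _ := by field_simp

lemma abs_sub_le_of_affine {a b α β : ℝ} {f : ℝ → ℝ}
    (hf : DifferentiableOn ℝ f (Icc a b))
    (hb : ∀ t ∈ Icc a b, |derivWithin f (Icc a b) t| ≤ α + β * (t - a))
    {s t : ℝ} (hs : s ∈ Icc a b) (ht : t ∈ Icc a b) (hst : s ≤ t) :
    |f t - f s| ≤ α * (t - s) + β * ((t - a) ^ 2 - (s - a) ^ 2) / 2 := by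
  have hG : ∀ x, HasDerivAt (fun x => α * x + β * (x - a) ^ 2 / 2) (α + β * (x - a)) x := by
    intro x
    have h := ((hasDerivAt_id x).const_mul α).add
      (((((hasDerivAt_id x).sub_const a).pow 2).const_mul β).div_const 2)
    refine HasDerivAt.congr_deriv h ?_
    simp
    ring
  have hd : ∀ x ∈ interior (Icc a b), HasDerivAt f (derivWithin f (Icc a b) x) x := fun x hx =>
    (hf x (interior_subset hx)).hasDerivWithinAt.hasDerivAt (mem_interior_iff_mem_nhds.1 hx)
  -- With `G′(x) = α + β * (x - a)`, both `G + f` and `G - f` are monotone.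
  have key : ∀ ε : ℝ, |ε| = 1 →
      MonotoneOn (fun x => (α * x + β * (x - a) ^ 2 / 2) + ε * f x) (Icc a b) := by
    intro ε hε
    have hD : ∀ x ∈ interior (Icc a b), HasDerivAt
        (fun x => (α * x + β * (x - a) ^ 2 / 2) + ε * f x)
        ((α + β * (x - a)) + ε * derivWithin f (Icc a b) x) x := fun x hx =>
      (hG x).add ((hd x hx).const_mul ε)
    apply monotoneOn_of_deriv_nonneg (convex_Icc a b)
    · have := hf.continuousOn
      fun_prop
    · exact fun x hx => (hD x hx).differentiableAt.differentiableWithinAt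
    · intro x hx
      rw [(hD x hx).deriv]
      have h1 := hb x (interior_subset hx)
      have h2 := neg_abs_le (ε * derivWithin f (Icc a b) x)
      rw [abs_mul, hε, one_mul] at h2
      linarith
  have h1 := key 1 (by simp) hs ht hst
  have h2 := key (-1) (by simp) hs ht hst
  simp only at h1 h2
  rw [abs_le]
  constructor <;> linarith

lemma left_half {a b m α β : ℝ} {f : ℝ → ℝ} (hm : m ∈ Icc a b)
    (hf : DifferentiableOn ℝ f (Icc a b))
    (hb : ∀ t ∈ Icc a b, |derivWithin f (Icc a b) t| ≤ α + β * (t - a)) :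
    |∫ t in a..m, (f m - f t)| ≤ α * (m - a) ^ 2 / 2 + β * (m - a) ^ 3 / 3 := by
  have h : ‖∫ t in a..m, (f m - f t)‖ ≤
      ∫ t in a..m, (α * (m - t) + β * ((m - a) ^ 2 - (t - a) ^ 2) / 2) := by
    apply norm_integral_le_of_norm_le hm.1
    · refine Eventually.of_forall fun t ht => ?_
      exact abs_sub_le_of_affine hf hb ⟨ht.1.le, ht.2.trans hm.2⟩ hm ht.2
    · apply Continuous.intervalIntegrable
      fun_prop
  refine h.trans (le_of_eq ?_)
  have hF : ∀ t ∈ uIcc a m, HasDerivAt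
      (fun t => -(α * (m - t) ^ 2 / 2) + β * ((m - a) ^ 2 * t - (t - a) ^ 3 / 3) / 2)
      (α * (m - t) + β * ((m - a) ^ 2 - (t - a) ^ 2) / 2) t := by
    intro t _
    have h := (((((hasDerivAt_id t).const_sub m).pow 2).const_mul α).div_const 2).neg.add
      (((((hasDerivAt_id t).const_mul ((m - a) ^ 2)).sub
        ((((hasDerivAt_id t).sub_const a).pow 3).div_const 3)).const_mul β).div_const 2)
    refine HasDerivAt.congr_deriv h ?_
    simp
    ring
  rw [integral_eq_sub_of_hasDerivAt hF (by apply Continuous.intervalIntegrable; fun_prop)]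
  ring

lemma right_half {a b m α β : ℝ} {f : ℝ → ℝ} (hm : m ∈ Icc a b)
    (hf : DifferentiableOn ℝ f (Icc a b))
    (hb : ∀ t ∈ Icc a b, |derivWithin f (Icc a b) t| ≤ α + β * (t - a)) :
    |∫ t in m..b, (f t - f m)| ≤
      α * (b - m) ^ 2 / 2 + β * (((b - a) ^ 3 - (m - a) ^ 3) / 3 - (m - a) ^ 2 * (b - m)) / 2 := by
  have h : ‖∫ t in m..b, (f t - f m)‖ ≤
      ∫ t in m..b, (α * (t - m) + β * ((t - a) ^ 2 - (m - a) ^ 2) / 2) := by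
    apply norm_integral_le_of_norm_le hm.2
    · refine Eventually.of_forall fun t ht => ?_
      exact abs_sub_le_of_affine hf hb hm ⟨hm.1.trans ht.1.le, ht.2⟩ ht.1.le
    · apply Continuous.intervalIntegrable
      fun_prop
  refine h.trans (le_of_eq ?_)
  have hF : ∀ t ∈ uIcc m b, HasDerivAt
      (fun t => α * (t - m) ^ 2 / 2 + β * ((t - a) ^ 3 / 3 - (m - a) ^ 2 * t) / 2)
      (α * (t - m) + β * ((t - a) ^ 2 - (m - a) ^ 2) / 2) t := by
    intro t _
    have h := (((((hasDerivAt_id t).sub_const m).pow 2).const_mul α).div_const 2).add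
      ((((((hasDerivAt_id t).sub_const a).pow 3).div_const 3).sub
        ((hasDerivAt_id t).const_mul ((m - a) ^ 2))).const_mul β |>.div_const 2)
    refine HasDerivAt.congr_deriv h ?_
    simp
    ring
  rw [integral_eq_sub_of_hasDerivAt hF (by apply Continuous.intervalIntegrable; fun_prop)]
  ring

/-- The constant `2^(3/r-3)` is the power-mean factor `(1/8)^(1-1/r)`, where `1/8` is the mass
`∫_0^(1/2) s ds` of the weight. -/
lemma const_rpow {r X : ℝ} (hX : 0 ≤ X) :
    (1 / (2 : ℝ) ^ ((3 : ℝ) - 3 / r)) * X ^ (1 / r) = (8 * X) ^ (1 / r) / 8 := by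
  have h8 : (8 : ℝ) = 2 ^ (3 : ℝ) := by norm_num
  have h8r : (8 : ℝ) ^ (1 / r) = 2 ^ (3 / r) := by
    rw [h8, ← Real.rpow_mul (by norm_num)]
    congr 1
    ring
  rw [Real.mul_rpow (by norm_num) hX, h8r, Real.rpow_sub (by norm_num), ← h8]
  have : (2 : ℝ) ^ (3 / r) ≠ 0 := by positivity
  field_simp

/-- classical midpoint power-mean inequality: if `f` is
differentiable on `[a,b]` with `|f′|^r` convex, `r ≥ 1`, then
`|f((a+b)/2) − (1/(b−a)) ∫_a^b f| ≤
  (b−a) 2^{3/r−3} [ (|f′(a)|^r/24 + |f′(b)|^r/12)^{1/r}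
                  + (|f′(a)|^r/12 + |f′(b)|^r/24)^{1/r} ]`. -/
theorem classical_midpoint_power_mean_inequality
    (a b r : ℝ) (hab : a < b) (hr : 1 ≤ r) (f : ℝ → ℝ)
    (hf : DifferentiableOn ℝ f (Set.Icc a b))
    (hconv : ConvexOn ℝ (Set.Icc a b) fun t => |derivWithin f (Set.Icc a b) t| ^ r) :
    |f ((a + b) / 2) - (1 / (b - a)) * ∫ t in a..b, f t| ≤
      (b - a) * (1 / (2 : ℝ) ^ ((3 : ℝ) - 3 / r)) *
        ((|derivWithin f (Set.Icc a b) a| ^ r / 24 +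
            |derivWithin f (Set.Icc a b) b| ^ r / 12) ^ (1 / r) +
         (|derivWithin f (Set.Icc a b) a| ^ r / 12 +
            |derivWithin f (Set.Icc a b) b| ^ r / 24) ^ (1 / r)) := by
  have hr0 : r ≠ 0 := by linarith
  have hd : 0 < b - a := by linarith
  set A := |derivWithin f (Icc a b) a| ^ r with hA
  set B := |derivWithin f (Icc a b) b| ^ r with hB
  have hA0 : 0 ≤ A := by positivity
  have hB0 : 0 ≤ B := by positivity
  have chord : ∀ t ∈ Icc a b,
      |derivWithin f (Icc a b) t| ^ r ≤ A + (t - a) / (b - a) * (B - A) := by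
    intro t ht
    have h := hconv.2 (left_mem_Icc.2 hab.le) (right_mem_Icc.2 hab.le)
      (div_nonneg (sub_nonneg.2 ht.2) hd.le) (div_nonneg (sub_nonneg.2 ht.1) hd.le)
      (by field_simp; ring)
    have e : (b - t) / (b - a) * a + (t - a) / (b - a) * b = t := by field_simp; ring
    simp only [smul_eq_mul, e] at h
    refine h.trans (le_of_eq ?_)
    rw [← hA, ← hB]
    field_simp
    ring
  -- The second hypothesis on `M` handles the degenerate case `A = B = 0`.
  have affine : ∀ M, 0 ≤ M → (M = 0 → A = 0 ∧ B = 0) → ∃ k, ∀ t ∈ Icc a b,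
      |derivWithin f (Icc a b) t| ≤
        (M ^ (1 / r) + k * (A - M)) + (k * (B - A) / (b - a)) * (t - a) := by
    intro M hM hM0
    obtain ⟨k, hk⟩ := exists_tangent_rpow hr hM
    refine ⟨k, fun t ht => ?_⟩
    have hc := chord t ht
    have hy : 0 ≤ A + (t - a) / (b - a) * (B - A) := le_trans (by positivity) hc
    have h1 := hk _ hy (fun h => by obtain ⟨h1, h2⟩ := hM0 h; simp [h1, h2])
    calc |derivWithin f (Icc a b) t|
        = (|derivWithin f (Icc a b) t| ^ r) ^ (1 / r) := by
          rw [one_div, Real.rpow_rpow_inv (abs_nonneg _) hr0]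
      _ ≤ (A + (t - a) / (b - a) * (B - A)) ^ (1 / r) := by gcongr
      _ ≤ _ := h1
      _ = _ := by ring
  have hm : (a + b) / 2 ∈ Icc a b := ⟨by linarith, by linarith⟩
  obtain ⟨k₁, hk₁⟩ := affine ((2 * A + B) / 3) (by positivity)
    (fun h => ⟨by linarith, by linarith⟩)
  obtain ⟨k₂, hk₂⟩ := affine ((A + 2 * B) / 3) (by positivity)
    (fun h => ⟨by linarith, by linarith⟩)
  have L := left_half hm hf hk₁
  have R := right_half hm hf hk₂
  set m := (a + b) / 2 with hmdef
  have L' : |∫ t in a..m, (f m - f t)| ≤ (b - a) ^ 2 * (((2 * A + B) / 3) ^ (1 / r) / 8) := by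
    refine L.trans (le_of_eq ?_)
    rw [hmdef]
    field_simp
    ring
  have R' : |∫ t in m..b, (f t - f m)| ≤ (b - a) ^ 2 * (((A + 2 * B) / 3) ^ (1 / r) / 8) := by
    refine R.trans (le_of_eq ?_)
    rw [hmdef]
    field_simp
    ring
  have hi1 : IntervalIntegrable f MeasureTheory.volume a m :=
    (hf.continuousOn.mono (Icc_subset_Icc_right hm.2)).intervalIntegrable_of_Icc hm.1
  have hi2 : IntervalIntegrable f MeasureTheory.volume m b :=
    (hf.continuousOn.mono (Icc_subset_Icc_left hm.1)).intervalIntegrable_of_Icc hm.2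
  have split : f m - (1 / (b - a)) * ∫ t in a..b, f t =
      ((∫ t in a..m, (f m - f t)) - ∫ t in m..b, (f t - f m)) / (b - a) := by
    rw [integral_sub (by simp) hi1, integral_sub hi2 (by simp),
      ← integral_add_adjacent_intervals hi1 hi2]
    simp only [integral_const, smul_eq_mul]
    field_simp
    ring
  rw [split, abs_div, abs_of_pos hd, div_le_iff₀ hd, mul_assoc (b - a), mul_add,
    const_rpow (by positivity), const_rpow (by positivity),
    show 8 * (A / 24 + B / 12) = (A + 2 * B) / 3 by ring,
    show 8 * (A / 12 + B / 24) = (2 * A + B) / 3 by ring]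
  refine (abs_sub _ _).trans ((add_le_add L' R').trans (le_of_eq ?_))
  ring
end
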